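/- For all natural numbers n ≥ 1 and real parameters a, b, c, d (with all denominators nonzero), the Racah polynomials R_n(λ(x)) with λ(x) = x(x+c+d+1) satisfy λ(x)·R_n(λ(x)) = α_n·R_{n+1}(λ(x)) + β_n·R_n(λ(x)) + γ_n·R_{n-1}(λ(x)) for all real x, where α_n = (a+n+1)(c+n+1)(a+b+n+1)(d+b+n+1)/((a+b+2n+1)(a+b+2n+2)), γ_n = n(b+n)(a−d+n)(a+b−c+n)/((a+b+2n)(a+b+2n+1)), and β_n = (−4n² − 4(a+b+1)n + (a−2d−b−2−2c)(a−b))/8 − (c+1)(b+d+1)/2 − (a−b)(a+b)(a−2d−b)(a−2c+b)/(8(a+b+2n)(a+b+2n+2)). -/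

import Mathlib

/-!
Write `R_n = ∑ k, C_n(k) e_k`, where `C_n(k) = (-n)_k (n+a+b+1)_k` carries the dependence on the
degree. Every `R_n` equals `1` at `x = 0`, where `λ` vanishes, so `β_n = -(α_n + γ_n)` and the
recurrence reads `λ R_n = α_n (R_{n+1} - R_n) - γ_n (R_n - R_{n-1})`. Multiplication by `λ` sends
`e_k` to a combination of `e_k` and `e_{k+1}`, while `α_n (C_{n+1}(k+1) - C_n(k+1))` and
`γ_n (C_n(k+1) - C_{n-1}(k+1))` are both explicit multiples of `C_n(k)`. Comparing coefficients of
`e_{k+1}` therefore leaves a single polynomial identity in `k`, `n` and the parameters.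
-/

/-- Rising factorial `(a)_k = a(a+1)⋯(a+k-1)`. -/
noncomputable def rf (a : ℝ) (k : ℕ) : ℝ := ∏ j ∈ Finset.range k, (a + j)

/-- The Racah polynomials `R_n(λ(x))` with `λ(x) = x(x+c+d+1)`:
`R_n(λ(x)) = ∑_{k=0}^n ((-n)_k (n+a+b+1)_k (-x)_k (x+c+d+1)_k) /
  ((a+1)_k (b+d+1)_k (c+1)_k k!)`. -/
noncomputable def racah (a b c d : ℝ) (n : ℕ) (x : ℝ) : ℝ :=
  ∑ k ∈ Finset.range (n + 1),
    rf (-(n : ℝ)) k * rf ((n : ℝ) + a + b + 1) k * rf (-x) k * rf (x + c + d + 1) k /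
      (rf (a + 1) k * rf (b + d + 1) k * rf (c + 1) k * (k.factorial : ℝ))

section RisingFactorial

variable (a : ℝ) (k : ℕ)

theorem rf_zero : rf a 0 = 1 := Finset.prod_range_zero _

theorem rf_succ : rf a (k + 1) = rf a k * (a + k) := Finset.prod_range_succ _ k

theorem rf_succ_left : rf a (k + 1) = a * rf (a + 1) k := by
  simp only [rf, Finset.prod_range_succ', Nat.cast_add_one, Nat.cast_zero, add_zero, mul_comm a,
    add_assoc, add_comm (1 : ℝ)]

theorem mul_rf_add_one : a * rf (a + 1) k = rf a k * (a + k) := by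
  rw [← rf_succ_left, rf_succ]

variable {a k}

theorem rf_neg_natCast_eq_zero {n : ℕ} (h : n < k) : rf (-(n : ℝ)) k = 0 :=
  Finset.prod_eq_zero (Finset.mem_range.mpr h) (neg_add_cancel _)

theorem add_natCast_ne_zero_of_rf_succ_ne_zero (h : rf a (k + 1) ≠ 0) : a + k ≠ 0 :=
  right_ne_zero_of_mul (rf_succ a k ▸ h)

end RisingFactorial

/-- The factor `(-ν)_k (ν+s+1)_k` of the `k`-th summand of a Racah polynomial that depends on the
degree. Here `s` stands for `a + b`, and the degree `ν` may be any real number. -/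
noncomputable def racahCoeff (s ν : ℝ) (k : ℕ) : ℝ := rf (-ν) k * rf (ν + s + 1) k

section DegreeFactor

variable (s ν : ℝ) (k : ℕ)

theorem racahCoeff_zero : racahCoeff s ν 0 = 1 := by simp only [racahCoeff, rf_zero, mul_one]

theorem racahCoeff_succ :
    racahCoeff s ν (k + 1) = (k - ν) * (ν + s + 1 + k) * racahCoeff s ν k := by
  simp only [racahCoeff, rf_succ]
  ring

theorem racahCoeff_add_one_sub :
    racahCoeff s (ν + 1) (k + 1) - racahCoeff s ν (k + 1) =
      -((k + 1) * (s + 2 * ν + 2) * (rf (-ν) k * rf (ν + s + 2) k)) := by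
  have left_neg : rf (-(ν + 1)) (k + 1) = -(ν + 1) * rf (-ν) k := by
    rw [rf_succ_left, neg_add, neg_add_cancel_right]
  have left_pos : rf (ν + s + 1) (k + 1) = (ν + s + 1) * rf (ν + s + 2) k := by
    rw [rf_succ_left, add_assoc (ν + s), one_add_one_eq_two]
  rw [racahCoeff, racahCoeff, left_neg, left_pos, show ν + 1 + s + 1 = ν + s + 2 by ring,
    rf_succ, rf_succ]
  ring

theorem racahCoeff_sub_sub_one :
    racahCoeff s ν (k + 1) - racahCoeff s (ν - 1) (k + 1) =
      -((k + 1) * (s + 2 * ν) * (rf (-ν + 1) k * rf (ν + s + 1) k)) := by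
  have diff := racahCoeff_add_one_sub s (ν - 1) k
  rw [sub_add_cancel, show -(ν - 1) = -ν + 1 by ring, show ν - 1 + s + 2 = ν + s + 1 by ring]
    at diff
  rw [diff]
  ring

variable {k} in
theorem racahCoeff_natCast_eq_zero {n : ℕ} (h : n < k) : racahCoeff s n k = 0 := by
  rw [racahCoeff, rf_neg_natCast_eq_zero h, zero_mul]

end DegreeFactor

/-- The coefficient `α_ν` of `R_{ν+1}` in the three-term recurrence, for a real degree `ν`. -/
noncomputable def racahAlpha (a b c d ν : ℝ) : ℝ :=
  (a + ν + 1) * (c + ν + 1) * (a + b + ν + 1) * (d + b + ν + 1) /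
    ((a + b + 2 * ν + 1) * (a + b + 2 * ν + 2))

/-- The coefficient `β_ν` of `R_ν` in the three-term recurrence, for a real degree `ν`. -/
noncomputable def racahBeta (a b c d ν : ℝ) : ℝ :=
  (-4 * ν ^ 2 - 4 * (a + b + 1) * ν + (a - 2 * d - b - 2 - 2 * c) * (a - b)) / 8 -
    (c + 1) * (b + d + 1) / 2 -
    (a - b) * (a + b) * (a - 2 * d - b) * (a - 2 * c + b) /
      (8 * (a + b + 2 * ν) * (a + b + 2 * ν + 2))

/-- The coefficient `γ_ν` of `R_{ν-1}` in the three-term recurrence, for a real degree `ν`. -/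
noncomputable def racahGamma (a b c d ν : ℝ) : ℝ :=
  ν * (b + ν) * (a - d + ν) * (a + b - c + ν) / ((a + b + 2 * ν) * (a + b + 2 * ν + 1))

section Coefficients

variable {a b c d ν : ℝ}

theorem racahBeta_eq_neg_add (h0 : a + b + 2 * ν ≠ 0) (h1 : a + b + 2 * ν + 1 ≠ 0)
    (h2 : a + b + 2 * ν + 2 ≠ 0) :
    racahBeta a b c d ν = -(racahAlpha a b c d ν + racahGamma a b c d ν) := by
  unfold racahAlpha racahBeta racahGamma
  generalize hs : a + b + 2 * ν = s at *
  obtain rfl : b = s - a - 2 * ν := by linarith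
  field_simp
  ring

variable (k : ℕ)

theorem racahAlpha_mul_racahCoeff_sub (h1 : a + b + 2 * ν + 1 ≠ 0) (h2 : a + b + 2 * ν + 2 ≠ 0) :
    (a + b + 2 * ν + 1) * (racahAlpha a b c d ν *
        (racahCoeff (a + b) (ν + 1) (k + 1) - racahCoeff (a + b) ν (k + 1))) =
      -((k + 1) * (a + ν + 1) * (c + ν + 1) * (d + b + ν + 1) * (ν + (a + b) + 1 + k)) *
        racahCoeff (a + b) ν k := by
  have alpha : (a + b + 2 * ν + 1) * (a + b + 2 * ν + 2) * racahAlpha a b c d ν =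
      (a + ν + 1) * (c + ν + 1) * (a + b + ν + 1) * (d + b + ν + 1) :=
    mul_div_cancel₀ _ (mul_ne_zero h1 h2)
  have shift : (ν + (a + b) + 1) * rf (ν + (a + b) + 2) k =
      rf (ν + (a + b) + 1) k * (ν + (a + b) + 1 + k) := by
    rw [← mul_rf_add_one, add_assoc (ν + (a + b)), one_add_one_eq_two]
  rw [racahCoeff_add_one_sub, racahCoeff]
  linear_combination -(k + 1) * rf (-ν) k * (rf (ν + (a + b) + 2) k * alpha +
    (a + ν + 1) * (c + ν + 1) * (d + b + ν + 1) * shift)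

theorem racahGamma_mul_racahCoeff_sub (h0 : a + b + 2 * ν ≠ 0) (h1 : a + b + 2 * ν + 1 ≠ 0) :
    (a + b + 2 * ν + 1) * (racahGamma a b c d ν *
        (racahCoeff (a + b) ν (k + 1) - racahCoeff (a + b) (ν - 1) (k + 1))) =
      (k + 1) * (b + ν) * (a - d + ν) * (a + b - c + ν) * (k - ν) * racahCoeff (a + b) ν k := by
  have gamma : (a + b + 2 * ν) * (a + b + 2 * ν + 1) * racahGamma a b c d ν =
      ν * (b + ν) * (a - d + ν) * (a + b - c + ν) := mul_div_cancel₀ _ (mul_ne_zero h0 h1)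
  have shift : -ν * rf (-ν + 1) k = rf (-ν) k * (-ν + k) := mul_rf_add_one (-ν) k
  rw [racahCoeff_sub_sub_one, racahCoeff]
  linear_combination (k + 1) * rf (ν + (a + b) + 1) k * (-rf (-ν + 1) k * gamma +
    (b + ν) * (a - d + ν) * (a + b - c + ν) * shift)

theorem racahCoeff_recurrence (h0 : a + b + 2 * ν ≠ 0) (h1 : a + b + 2 * ν + 1 ≠ 0)
    (h2 : a + b + 2 * ν + 2 ≠ 0) :
    racahAlpha a b c d ν * (racahCoeff (a + b) (ν + 1) (k + 1) - racahCoeff (a + b) ν (k + 1)) -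
        racahGamma a b c d ν *
          (racahCoeff (a + b) ν (k + 1) - racahCoeff (a + b) (ν - 1) (k + 1)) =
      (k + 1) * (k + 1 + c + d + 1) * racahCoeff (a + b) ν (k + 1) -
        (a + 1 + k) * (b + d + 1 + k) * (c + 1 + k) * (k + 1) * racahCoeff (a + b) ν k := by
  refine mul_left_cancel₀ h1 ?_
  rw [mul_sub, racahAlpha_mul_racahCoeff_sub k h1 h2, racahGamma_mul_racahCoeff_sub k h0 h1,
    racahCoeff_succ]
  ring

end Coefficients

/-- The factor of the `k`-th summand of a Racah polynomial that does not depend on the degree; the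
recurrence is verified by comparing coefficients of these functions of `x`. -/
noncomputable def racahBasis (a b c d x : ℝ) (k : ℕ) : ℝ :=
  rf (-x) k * rf (x + c + d + 1) k /
    (rf (a + 1) k * rf (b + d + 1) k * rf (c + 1) k * (k.factorial : ℝ))

section Sums

variable (a b c d x : ℝ)

theorem racahBasis_succ (k : ℕ) :
    racahBasis a b c d x (k + 1) = racahBasis a b c d x k *
      ((-x + k) * (x + c + d + 1 + k) /
        ((a + 1 + k) * (b + d + 1 + k) * (c + 1 + k) * (k + 1))) := by
  simp only [racahBasis, rf_succ, Nat.factorial_succ, Nat.cast_mul, Nat.cast_succ,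
    div_mul_div_comm]
  ring

variable {a b c d} in
theorem mul_racahBasis {k : ℕ} (ha : a + 1 + k ≠ 0) (hbd : b + d + 1 + k ≠ 0)
    (hc : c + 1 + k ≠ 0) :
    x * (x + c + d + 1) * racahBasis a b c d x k =
      k * (k + c + d + 1) * racahBasis a b c d x k -
        (a + 1 + k) * (b + d + 1 + k) * (c + 1 + k) * (k + 1) * racahBasis a b c d x (k + 1) := by
  rw [racahBasis_succ, mul_left_comm _ (racahBasis a b c d x k), mul_div_cancel₀ _ (by positivity)]
  ring

theorem racah_eq_sum {n N : ℕ} (h : n < N) :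
    racah a b c d n x =
      ∑ k ∈ Finset.range N, racahCoeff (a + b) n k * racahBasis a b c d x k := by
  rw [← Finset.sum_subset (Finset.range_mono (Nat.succ_le_of_lt h))]
  · refine Finset.sum_congr rfl fun k _ => ?_
    rw [racahCoeff, racahBasis, ← add_assoc (n : ℝ) a b, mul_div_assoc', ← mul_assoc]
  · intro k _ hk
    rw [racahCoeff_natCast_eq_zero _ (by simpa using hk), zero_mul]

theorem racah_sub_racah {m n N : ℕ} (hm : m ≤ N) (hn : n ≤ N) :
    racah a b c d m x - racah a b c d n x =
      ∑ k ∈ Finset.range N, (racahCoeff (a + b) m (k + 1) - racahCoeff (a + b) n (k + 1)) *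
        racahBasis a b c d x (k + 1) := by
  rw [racah_eq_sum a b c d x (Nat.lt_succ_of_le hm), racah_eq_sum a b c d x (Nat.lt_succ_of_le hn),
    ← Finset.sum_sub_distrib, Finset.sum_range_succ', racahCoeff_zero, racahCoeff_zero, sub_self,
    add_zero]
  simp only [sub_mul]

variable {a b c d}

theorem mul_racah_eq_sum {n : ℕ} (ha : ∀ k ≤ n, a + 1 + k ≠ 0) (hbd : ∀ k ≤ n, b + d + 1 + k ≠ 0)
    (hc : ∀ k ≤ n, c + 1 + k ≠ 0) :
    x * (x + c + d + 1) * racah a b c d n x =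
      ∑ k ∈ Finset.range (n + 1),
        ((k + 1) * (k + 1 + c + d + 1) * racahCoeff (a + b) n (k + 1) -
          (a + 1 + k) * (b + d + 1 + k) * (c + 1 + k) * (k + 1) * racahCoeff (a + b) n k) *
        racahBasis a b c d x (k + 1) := by
  let f : ℕ → ℝ := fun k =>
    k * (k + c + d + 1) * racahCoeff (a + b) n k * racahBasis a b c d x k
  have telescope : ∑ k ∈ Finset.range (n + 1), (f (k + 1) - f k) = 0 := by
    rw [Finset.sum_range_sub]
    simp only [f, racahCoeff_natCast_eq_zero (a + b) n.lt_succ_self, Nat.cast_zero, zero_mul,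
      mul_zero, sub_zero]
  rw [racah_eq_sum a b c d x n.lt_succ_self, Finset.mul_sum, ← add_zero (Finset.sum _ _),
    ← telescope, ← Finset.sum_add_distrib]
  refine Finset.sum_congr rfl fun k hk => ?_
  have hkn : k ≤ n := Finset.mem_range_succ_iff.mp hk
  simp only [f, Nat.cast_succ]
  linear_combination racahCoeff (a + b) n k * mul_racahBasis x (ha k hkn) (hbd k hkn) (hc k hkn)

theorem mul_racah_eq_sub {n : ℕ} (hn : 1 ≤ n)
    (ha : ∀ k ≤ n, a + 1 + k ≠ 0) (hbd : ∀ k ≤ n, b + d + 1 + k ≠ 0)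
    (hc : ∀ k ≤ n, c + 1 + k ≠ 0)
    (h0 : a + b + 2 * n ≠ 0) (h1 : a + b + 2 * n + 1 ≠ 0) (h2 : a + b + 2 * n + 2 ≠ 0) :
    x * (x + c + d + 1) * racah a b c d n x =
      racahAlpha a b c d n * (racah a b c d (n + 1) x - racah a b c d n x) -
        racahGamma a b c d n * (racah a b c d n x - racah a b c d (n - 1) x) := by
  rw [mul_racah_eq_sum x ha hbd hc, racah_sub_racah a b c d x le_rfl n.le_succ,
    racah_sub_racah a b c d x n.le_succ ((n.sub_le 1).trans n.le_succ), Nat.cast_succ,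
    Nat.cast_pred hn, Finset.mul_sum, Finset.mul_sum, ← Finset.sum_sub_distrib]
  refine Finset.sum_congr rfl fun k _ => ?_
  rw [← racahCoeff_recurrence k h0 h1 h2]
  ring

end Sums

theorem racah_three_term (n : ℕ) (hn : 1 ≤ n) (a b c d x : ℝ)
    (ha : ∀ k ≤ n + 1, rf (a + 1) k ≠ 0)
    (hbd : ∀ k ≤ n + 1, rf (b + d + 1) k ≠ 0)
    (hc : ∀ k ≤ n + 1, rf (c + 1) k ≠ 0)
    (h0 : a + b + 2 * n ≠ 0) (h1 : a + b + 2 * n + 1 ≠ 0) (h2 : a + b + 2 * n + 2 ≠ 0) :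
    x * (x + c + d + 1) * racah a b c d n x =
      ((a + n + 1) * (c + n + 1) * (a + b + n + 1) * (d + b + n + 1) /
            ((a + b + 2 * n + 1) * (a + b + 2 * n + 2))) *
          racah a b c d (n + 1) x +
        ((-4 * n ^ 2 - 4 * (a + b + 1) * n + (a - 2 * d - b - 2 - 2 * c) * (a - b)) / 8 -
            (c + 1) * (b + d + 1) / 2 -
            (a - b) * (a + b) * (a - 2 * d - b) * (a - 2 * c + b) /
              (8 * (a + b + 2 * n) * (a + b + 2 * n + 2))) *
          racah a b c d n x +
        ((n : ℝ) * (b + n) * (a - d + n) * (a + b - c + n) /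
            ((a + b + 2 * n) * (a + b + 2 * n + 1))) *
          racah a b c d (n - 1) x := by
  change _ = racahAlpha a b c d n * _ + racahBeta a b c d n * _ + racahGamma a b c d n * _
  rw [racahBeta_eq_neg_add h0 h1 h2,
    mul_racah_eq_sub x hn
      (fun k hk => add_natCast_ne_zero_of_rf_succ_ne_zero (ha _ (Nat.succ_le_succ hk)))
      (fun k hk => add_natCast_ne_zero_of_rf_succ_ne_zero (hbd _ (Nat.succ_le_succ hk)))
      (fun k hk => add_natCast_ne_zero_of_rf_succ_ne_zero (hc _ (Nat.succ_le_succ hk)))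
      h0 h1 h2]
  ring
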